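/- Let n ≥ 2 and d_1, …, d_n ≥ 1, and let X = S^{d_1} ∨ ⋯ ∨ S^{d_n} be the wedge sum, i.e., the quotient of the disjoint union of S^{d_1}, …, S^{d_n} obtained by identifying one chosen basepoint in each sphere to a single point, equipped with the quotient topology. Then TC(X) = 2. -/

import Mathlib

open scoped ENNReal

/-- The (reduced) topological complexity of a space `X`: the least `n` (or `∞`) such that
`X × X` admits a cover by `n + 1` open sets, each carrying a continuous motion planner,
i.e. a continuous map `s : Uᵢ → P(X)` with `(s z) 0 = z.1` and `(s z) 1 = z.2`. -/
noncomputable def topComplexity (X : Type*) [TopologicalSpace X] : ℕ∞ :=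
  sInf {n : ℕ∞ | ∃ m : ℕ, n = (m : ℕ∞) ∧
    ∃ U : Fin (m + 1) → Set (X × X), (∀ i, IsOpen (U i)) ∧ (⋃ i, U i) = Set.univ ∧
      ∀ i, ∃ s : C(U i, C(unitInterval, X)),
        ∀ z : U i, (s z) 0 = (z : X × X).1 ∧ (s z) 1 = (z : X × X).2}

/-- The unit sphere `S^d ⊆ ℝ^{d+1}` with its subspace topology. -/
noncomputable def unitSphere (d : ℕ) : Type :=
  Metric.sphere (0 : EuclideanSpace ℝ (Fin (d + 1))) 1

noncomputable instance (d : ℕ) : TopologicalSpace (unitSphere d) :=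
  instTopologicalSpaceSubtype

/-- The setoid on the disjoint union of the spheres `S^{d i}` identifying the chosen
basepoints `b i` to a single point. -/
noncomputable def wedgeSetoid {n : ℕ} (d : Fin n → ℕ) (b : ∀ i, unitSphere (d i)) :
    Setoid (Σ i, unitSphere (d i)) where
  r x y := x = y ∨ (x.2 = b x.1 ∧ y.2 = b y.1)
  iseqv := by
    constructor
    · exact fun x => Or.inl rfl
    · rintro x y (rfl | ⟨h₁, h₂⟩)
      · exact Or.inl rfl
      · exact Or.inr ⟨h₂, h₁⟩
    · rintro x y z (rfl | ⟨h₁, h₂⟩) (rfl | ⟨h₃, h₄⟩)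
      · exact Or.inl rfl
      · exact Or.inr ⟨h₃, h₄⟩
      · exact Or.inr ⟨h₁, h₂⟩
      · exact Or.inr ⟨h₁, h₄⟩

/-- The wedge sum `S^{d 0} ∨ ⋯ ∨ S^{d (n-1)}`: the quotient of the disjoint union of the
spheres identifying one chosen basepoint in each sphere to a single point, with the
quotient topology. -/
noncomputable def WedgeOfSpheres {n : ℕ} (d : Fin n → ℕ) (b : ∀ i, unitSphere (d i)) :
    Type :=
  Quotient (wedgeSetoid d b)

noncomputable instance {n : ℕ} (d : Fin n → ℕ) (b : ∀ i, unitSphere (d i)) :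
    TopologicalSpace (WedgeOfSpheres d b) :=
  instTopologicalSpaceQuotient

/-!
Lower bound: composing with the collapses onto two of the spheres `A` and `B`, a cover of `X × X`
by two open sets with motion planners would deform the identity of `A × B` into a map missing a
point. This is impossible: a thickening embeds `A × B × P` as an open subset of a Euclidean space,
so such a deformation would give a compactly supported perturbation of the identity of that space
which is not surjective, hence a `C¹` retraction `x ↦ x + h x` of a ball onto its boundary. But the
integral of `det (1 + t • fderiv ℝ h x)` over the ball is a polynomial in `t`; by the change of
variables formula it equals the volume for small `t > 0`, and for a retraction it vanishes at
`t = 1`.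

Upper bound: if `f` is a real function on `X` and `{a < f}`, `{f < b}` are both contractible in `X`
for some `a < b`, then `X × X` is covered by three open sets with motion planners, the mixed pairs
being split into disjoint open sets according to which coordinate has the larger value of `f`. On
the wedge, `f` is the distance to the basepoint.
-/

section NoRetraction

open MeasureTheory Polynomial Set Filter Topology

theorem exists_polynomial_eval_eq_integral {α : Type*} [MeasurableSpace α] {μ : Measure α}
    {P : α → ℝ[X]} {n : ℕ} (hdeg : ∀ x, (P x).natDegree ≤ n)
    (hint : ∀ t, Integrable (fun x => (P x).eval t) μ) :
    ∃ Q : ℝ[X], ∀ t, Q.eval t = ∫ x, (P x).eval t ∂μ := by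
  let node : ℕ → ℝ := Nat.cast
  let s := Finset.range (n + 1)
  have hnode : Set.InjOn node s := Nat.cast_injective.injOn
  have hP : ∀ x, P x = ∑ k ∈ s, C ((P x).eval (node k)) * Lagrange.basis s node k := by
    intro x
    have hlt : (P x).degree < s.card := by
      simpa [s] using degree_le_natDegree.trans_lt (by exact_mod_cast Nat.lt_succ_of_le (hdeg x))
    simpa [Lagrange.interpolate_apply] using Lagrange.eq_interpolate hnode hlt
  refine ⟨∑ k ∈ s, C (∫ x, (P x).eval (node k) ∂μ) * Lagrange.basis s node k, fun t => ?_⟩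
  have heval : ∀ x, (P x).eval t =
      ∑ k ∈ s, (P x).eval (node k) * (Lagrange.basis s node k).eval t := fun x => by
    conv_lhs => rw [hP x]
    simp only [eval_finsetSum, eval_mul, eval_C]
  simp only [heval, eval_finsetSum, eval_mul, eval_C]
  rw [integral_finsetSum _ fun k _ => (hint _).mul_const _]
  simp only [integral_mul_const]

theorem nonempty_inter_frontier {α : Type*} [TopologicalSpace α] {s t : Set α}
    (ht : IsPreconnected t) (hts : (t ∩ s).Nonempty) (htsc : (t ∩ sᶜ).Nonempty) :
    (t ∩ frontier s).Nonempty := by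
  by_contra hempty
  have hcover : ∀ x ∈ t, x ∉ interior s → x ∉ closure s := fun x hx hi hc =>
    hempty ⟨x, hx, hc, hi⟩
  obtain ⟨a, hat, has⟩ := hts
  obtain ⟨c, hct, hcs⟩ := htsc
  obtain ⟨x, -, hxi, hxc⟩ := ht (interior s) (closure s)ᶜ isOpen_interior
    isClosed_closure.isOpen_compl (fun x hx => or_iff_not_imp_left.2 (hcover x hx))
    ⟨a, hat, by_contra fun h => hcover a hat h (subset_closure has)⟩
    ⟨c, hct, hcover c hct fun h => hcs (interior_subset h)⟩
  exact hxc (subset_closure (interior_subset hxi))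

theorem lipschitzWith_indicator_of_frontier {E F : Type*} [NormedAddCommGroup E]
    [NormedSpace ℝ E] [NormedAddCommGroup F] {f : E → F} {s : Set E} {K : NNReal}
    (hs : IsClosed s) (hf : LipschitzOnWith K f s) (h0 : ∀ x ∈ frontier s, f x = 0) :
    LipschitzWith K (s.indicator f) := by
  have hcross : ∀ x ∈ s, ∀ y ∉ s, dist (f x) 0 ≤ K * dist x y := by
    intro x hx y hy
    obtain ⟨z, hz, hzs⟩ : (segment ℝ x y ∩ frontier s).Nonempty :=
      nonempty_inter_frontier (convex_segment x y).isPreconnected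
        ⟨x, left_mem_segment ℝ x y, hx⟩ ⟨y, right_mem_segment ℝ x y, hy⟩
    calc dist (f x) 0 = dist (f x) (f z) := by rw [h0 z hzs]
      _ ≤ K * dist x z := hf.dist_le_mul x hx z (hs.frontier_subset hzs)
      _ ≤ K * dist x y := by
        gcongr
        rw [← dist_add_dist_of_mem_segment hz]
        exact le_add_of_nonneg_right dist_nonneg
  refine LipschitzWith.of_dist_le_mul fun x y => ?_
  by_cases hx : x ∈ s <;> by_cases hy : y ∈ s
  · simpa [hx, hy] using hf.dist_le_mul x hx y hy
  · simpa [hx, hy] using hcross x hx y hy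
  · simpa [hx, hy, dist_comm] using hcross y hy x hx
  · simp only [indicator_of_notMem hx, indicator_of_notMem hy, dist_self]
    positivity

variable {E : Type*} [NormedAddCommGroup E] [NormedSpace ℝ E]

theorem exists_polynomial_eval_eq_det_one_add_smul
    [FiniteDimensional ℝ E] (A : E →L[ℝ] E) :
    ∃ P : ℝ[X], P.natDegree ≤ Module.finrank ℝ E ∧ ∀ t, P.eval t = (1 + t • A).det := by
  let b := Module.finBasis ℝ E
  let M := LinearMap.toMatrix b b (A : E →ₗ[ℝ] E)
  refine ⟨((X : ℝ[X]) • M.map C + (1 : Matrix _ _ ℝ).map C).det, ?_, fun t => ?_⟩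
  · simpa using natDegree_det_X_add_C_le M 1
  · rw [ContinuousLinearMap.det, ← LinearMap.det_toMatrix b, ← coe_evalRingHom,
      RingHom.map_det]
    congr 1
    ext i j
    rcases eq_or_ne i j with rfl | hij
    · simp [M, LinearMap.toMatrix_apply, add_comm (1 : ℝ), mul_comm t]
    · simp [M, LinearMap.toMatrix_apply, mul_comm t, hij]

theorem bijective_id_add_of_lipschitzWith [CompleteSpace E] {f : E → E} {K : NNReal}
    (hf : LipschitzWith K f) (hK : K < 1) : Function.Bijective fun x => x + f x := by
  have happ : ApproximatesLinearOn (fun x => x + f x)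
      ((ContinuousLinearEquiv.refl ℝ E : E ≃L[ℝ] E) : E →L[ℝ] E) univ K := by
    rw [ApproximatesLinearOn.approximatesLinearOn_iff_lipschitzOnWith, lipschitzOnWith_univ]
    convert hf using 1
    ext x
    simp
  have hlt : Subsingleton E ∨
      K < ‖((ContinuousLinearEquiv.refl ℝ E).symm : E →L[ℝ] E)‖₊⁻¹ := by
    rcases subsingleton_or_nontrivial E with h | h
    · exact .inl h
    · exact .inr (by simpa [ContinuousLinearMap.nnnorm_id] using hK)
  exact ⟨injOn_univ.1 (happ.injOn hlt), happ.surjective hlt⟩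

theorem image_eq_of_bijective_of_eqOn_compl {α : Type*} {f : α → α} {s : Set α}
    (hf : Function.Bijective f) (hs : ∀ x ∉ s, f x = x) : f '' s = s := by
  rw [← compl_inj_iff, ← image_compl_eq hf]
  exact (image_congr hs).trans (image_id' _)

theorem eventually_det_one_add_pos : ∀ᶠ A : E →L[ℝ] E in 𝓝 0, 0 < (1 + A).det := by
  have hcont : Continuous fun A : E →L[ℝ] E => (1 + A).det :=
    ContinuousLinearMap.continuous_det.comp (by fun_prop)
  have h0 : (0 : ℝ) < (1 + (0 : E →L[ℝ] E)).det := by simp [ContinuousLinearMap.det]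
  exact hcont.tendsto 0 (lt_mem_nhds h0)

section Volume

variable [FiniteDimensional ℝ E] [MeasurableSpace E] [BorelSpace E] (μ : Measure E)
  [μ.IsAddHaarMeasure]

theorem eventually_integral_det_one_add_smul_eq {s : Set E} {h : E → E} (hs : IsCompact s)
    (hconv : Convex ℝ s) (hh : ContDiff ℝ 1 h) (h0 : ∀ x ∈ frontier s, h x = 0) :
    ∀ᶠ t : ℝ in 𝓝[>] 0, ∫ x in s, (1 + t • fderiv ℝ h x).det ∂μ = μ.real s := by
  obtain ⟨K, hK⟩ := hh.contDiffOn.exists_lipschitzOnWith one_ne_zero hconv hs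
  have hLip := lipschitzWith_indicator_of_frontier hs.isClosed hK h0
  have hdet : ∀ᶠ t : ℝ in 𝓝 0, ∀ x ∈ s, 0 < (1 + t • fderiv ℝ h x).det := by
    refine hs.eventually_forall_of_forall_eventually fun x _ => ?_
    have hcont : Continuous fun z : ℝ × E => z.1 • fderiv ℝ h z.2 :=
      continuous_fst.smul ((hh.continuous_fderiv one_ne_zero).comp continuous_snd)
    have hzero : Tendsto (fun z : ℝ × E => z.1 • fderiv ℝ h z.2) (𝓝 (0, x)) (𝓝 0) := by
      simpa only [zero_smul] using hcont.tendsto (0, x)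
    exact hzero.eventually eventually_det_one_add_pos
  have hsmall : ∀ᶠ t : ℝ in 𝓝 0, ‖t‖₊ * K < 1 :=
    (by fun_prop : Continuous fun t : ℝ => ‖t‖₊ * K).tendsto 0 (gt_mem_nhds (by simp))
  filter_upwards [(hdet.and hsmall).filter_mono nhdsWithin_le_nhds] with t ⟨hpos, htK⟩
  have hbij : Function.Bijective fun x => x + t • s.indicator h x :=
    bijective_id_add_of_lipschitzWith ((lipschitzWith_smul t).comp hLip) htK
  have heq : EqOn (fun x => x + t • h x) (fun x => x + t • s.indicator h x) s :=
    fun x hx => by simp [hx]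
  have himage : (fun x => x + t • h x) '' s = s := by
    rw [image_congr heq, image_eq_of_bijective_of_eqOn_compl hbij fun x hx => by simp [hx]]
  have hinj : InjOn (fun x => x + t • h x) s := hbij.injective.injOn.congr heq.symm
  have hderiv : ∀ x ∈ s, HasFDerivWithinAt (fun x => x + t • h x) (1 + t • fderiv ℝ h x) s x :=
    fun x _ => ((hasFDerivAt_id x).add
      ((hh.differentiable one_ne_zero x).hasFDerivAt.const_smul t)).hasFDerivWithinAt
  calc ∫ x in s, (1 + t • fderiv ℝ h x).det ∂μ
      = ∫ x in s, |(1 + t • fderiv ℝ h x).det| • (1 : ℝ) ∂μ :=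
        setIntegral_congr_fun hs.measurableSet fun x hx => by simp [abs_of_pos (hpos x hx)]
    _ = ∫ _ in (fun x => x + t • h x) '' s, (1 : ℝ) ∂μ :=
        (integral_image_eq_integral_abs_det_fderiv_smul μ hs.measurableSet hderiv hinj
          fun _ => (1 : ℝ)).symm
    _ = μ.real s := by rw [himage, setIntegral_const, smul_eq_mul, mul_one]

theorem integral_det_one_add_eq {s : Set E} {h : E → E} (hs : IsCompact s)
    (hconv : Convex ℝ s) (hh : ContDiff ℝ 1 h) (h0 : ∀ x ∈ frontier s, h x = 0) :
    ∫ x in s, (1 + fderiv ℝ h x).det ∂μ = μ.real s := by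
  choose P hdeg hP using fun x => exists_polynomial_eval_eq_det_one_add_smul (fderiv ℝ h x)
  have hcont : ∀ t : ℝ, Continuous fun x => (1 + t • fderiv ℝ h x).det := fun t =>
    ContinuousLinearMap.continuous_det.comp
      (continuous_const.add ((hh.continuous_fderiv one_ne_zero).const_smul t))
  obtain ⟨Q, hQ⟩ := exists_polynomial_eval_eq_integral (μ := μ.restrict s) hdeg fun t => by
    simpa only [hP, IntegrableOn] using (hcont t).continuousOn.integrableOn_compact (μ := μ) hs
  simp only [hP] at hQ
  have hconst : Q = C (μ.real s) := by
    obtain ⟨r, hr, hsub⟩ := mem_nhdsGT_iff_exists_Ioo_subset.1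
      (eventually_integral_det_one_add_smul_eq μ hs hconv hh h0)
    refine eq_of_infinite_eval_eq _ _ ((Ioo_infinite hr).mono fun t ht => ?_)
    simpa only [mem_ofPred_eq, hQ, eval_C] using hsub ht
  simpa [hconst] using (hQ 1).symm

end Volume

section InnerProduct

variable {E : Type*} [NormedAddCommGroup E] [InnerProductSpace ℝ E] [FiniteDimensional ℝ E]

theorem det_eq_zero_of_hasFDerivAt_of_norm_eq {f : E → E} {f' : E →L[ℝ] E} {x : E} {r : ℝ}
    (hr : r ≠ 0) (hf : HasFDerivAt f f' x) (hnorm : ∀ y, ‖f y‖ = r) : f'.det = 0 := by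
  by_contra hdet
  have horth : ∀ v, inner ℝ (f x) (f' v) = 0 := by
    have hconst : HasFDerivAt (‖f ·‖ ^ 2) (0 : E →L[ℝ] ℝ) x := by
      simpa only [hnorm] using hasFDerivAt_const (r ^ 2) x
    intro v
    simpa using DFunLike.congr_fun (hf.norm_sq.unique hconst) v
  obtain ⟨v, hv⟩ := (f'.toContinuousLinearEquivOfDetNeZero hdet).surjective (f x)
  rw [ContinuousLinearMap.toContinuousLinearEquivOfDetNeZero_apply] at hv
  refine hr ?_
  rw [← hnorm x, norm_eq_zero, ← inner_self_eq_zero (𝕜 := ℝ)]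
  simpa only [hv] using horth v

theorem exists_mem_sphere_ne_of_contDiff {f : E → E} {r : ℝ} (hr : 0 < r)
    (hf : ContDiff ℝ 1 f) (hnorm : ∀ x, ‖f x‖ = r) : ∃ x ∈ Metric.sphere (0 : E) r, f x ≠ x := by
  by_contra! hfix
  borelize E
  let μ : Measure E := Measure.addHaar
  have hdet : ∀ x, (1 + fderiv ℝ (fun y => f y - y) x).det = 0 := fun x => by
    have hdf := hf.differentiable one_ne_zero x
    rw [fderiv_fun_sub hdf differentiableAt_fun_id, fderiv_fun_id, ← ContinuousLinearMap.one_def,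
      add_sub_cancel]
    exact det_eq_zero_of_hasFDerivAt_of_norm_eq hr.ne' hdf.hasFDerivAt hnorm
  have hvol := integral_det_one_add_eq μ (isCompact_closedBall (0 : E) r)
    (convex_closedBall 0 r) (hf.sub contDiff_id) fun x hx => by
      rw [frontier_closedBall _ hr.ne'] at hx
      exact sub_eq_zero.2 (hfix x hx)
  simp only [id, hdet, integral_zero] at hvol
  refine (Metric.measure_closedBall_pos μ (0 : E) hr).ne' ?_
  exact (measureReal_eq_zero_iff measure_closedBall_lt_top.ne).1 hvol.symm

/-- Smoothing `h` keeps the value `0` omitted, and pushing `x + h x` radially onto a large sphere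
would then retract a ball onto its boundary. -/
theorem exists_add_eq_zero_of_hasCompactSupport {h : E → E} (hh : Continuous h)
    (hsupp : HasCompactSupport h) : ∃ x, x + h x = 0 := by
  by_contra! hne
  obtain ⟨g, hg, hgh, hgsupp⟩ := hh.exists_contDiff_approx 1 (ε := fun x => ‖x + h x‖)
    (by fun_prop) fun x => norm_pos_iff.2 (hne x)
  have hne' : ∀ x, x + g x ≠ 0 := fun x hx => by
    have hlt := hgh x
    rw [dist_comm, dist_eq_norm, eq_neg_of_add_eq_zero_right hx, sub_neg_eq_add, add_comm] at hlt
    exact hlt.false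
  obtain ⟨r, hr, hball⟩ := hsupp.isCompact.isBounded.subset_ball_lt 0 0
  have hgzero : ∀ x ∈ Metric.sphere (0 : E) r, g x = 0 := fun x hx => by
    by_contra hgx
    have hxr := hball (subset_tsupport _ (hgsupp hgx))
    exact (Metric.mem_ball.1 hxr).ne (Metric.mem_sphere.1 hx)
  let f := fun x => (r / ‖x + g x‖) • (x + g x)
  have hf : ContDiff ℝ 1 f :=
    (contDiff_const.div ((contDiff_id.add hg).norm ℝ hne')
      fun x => norm_ne_zero_iff.2 (hne' x)).smul (contDiff_id.add hg)
  have hnorm : ∀ x, ‖f x‖ = r := fun x => by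
    rw [norm_smul, norm_div, norm_norm, div_mul_cancel₀ _ (norm_ne_zero_iff.2 (hne' x)),
      Real.norm_of_nonneg hr.le]
  obtain ⟨x, hx, hfx⟩ := exists_mem_sphere_ne_of_contDiff hr hf hnorm
  refine hfx ?_
  simp only [f, hgzero x hx, add_zero, mem_sphere_zero_iff_norm.1 hx, div_self hr.ne', one_smul]

end InnerProduct

theorem surjective_id_add_of_hasCompactSupport [FiniteDimensional ℝ E] {h : E → E}
    (hh : Continuous h) (hsupp : HasCompactSupport h) : Function.Surjective fun x => x + h x := by
  intro y
  let e : E ≃L[ℝ] EuclideanSpace ℝ (Fin (Module.finrank ℝ E)) := toEuclidean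
  let φ : EuclideanSpace ℝ (Fin (Module.finrank ℝ E)) ≃ₜ E :=
    e.symm.toHomeomorph.trans (Homeomorph.addRight y)
  have hφ : ∀ z, φ z = e.symm z + y := fun z => rfl
  obtain ⟨z, hz⟩ := exists_add_eq_zero_of_hasCompactSupport (h := e ∘ h ∘ φ)
    (by fun_prop) ((hsupp.comp_homeomorph φ).comp_left e.map_zero)
  refine ⟨φ z, ?_⟩
  have hz' := congrArg e.symm hz
  simp only [Function.comp_apply, map_add, ContinuousLinearEquiv.symm_apply_apply, map_zero] at hz'
  calc φ z + h (φ z) = e.symm z + h (φ z) + y := by rw [hφ]; abel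
    _ = y := by rw [hz', zero_add]

end NoRetraction

section Homotopy

open Set Filter Topology unitInterval

theorem continuous_extend_zero_of_isOpenEmbedding {α β γ : Type*} [TopologicalSpace α]
    [TopologicalSpace β] [T2Space β] [TopologicalSpace γ] [Zero γ] {g : α → β}
    (hg : IsOpenEmbedding g) {f : α → γ} (hf : Continuous f) (hsupp : HasCompactSupport f) :
    Continuous (Function.extend g f 0) := by
  refine continuous_of_tsupport fun y hy => ?_
  obtain ⟨x, -, rfl⟩ := hsupp.tsupport_extend_zero_subset hg.continuous hy
  rw [← hg.continuousAt_iff, Function.extend_comp hg.injective]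
  exact hf.continuousAt

variable {X Y Z E : Type*} [TopologicalSpace X] [TopologicalSpace Y] [TopologicalSpace Z]
  [NormedAddCommGroup E] [NormedSpace ℝ E] [FiniteDimensional ℝ E]

/-- Damping the homotopy away from one slice of the thickening `X × P` turns it into a compactly
supported perturbation of the identity of `E`. -/
theorem surjective_of_homotopic_id {P : Type*} [TopologicalSpace P] [T2Space P]
    [LocallyCompactSpace P] [Nonempty P] [CompactSpace X] {ι : X × P → E} (hι : IsOpenEmbedding ι)
    {f : C(X, X)} (hf : f.Homotopic (.id X)) : Function.Surjective f := by
  obtain ⟨H⟩ := hf.symm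
  let p₀ : P := Classical.arbitrary P
  obtain ⟨w, hw1, -, hwsupp, hwI⟩ :=
    exists_continuous_one_zero_of_isCompact (isCompact_singleton (x := p₀)) isClosed_empty
      (disjoint_empty _)
  let damped : C(P, I) := ⟨fun p => ⟨w p, hwI p⟩, by fun_prop⟩
  let k : X × P → E := fun z => ι (H (damped z.2, z.1), z.2) - ι z
  have hk : Continuous k := by
    have := hι.continuous
    fun_prop
  have hksupp : HasCompactSupport k := by
    refine .intro' (isCompact_univ.prod hwsupp.isCompact)
      (isClosed_univ.prod (isClosed_tsupport w)) fun z hz => ?_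
    have hz0 : damped z.2 = 0 :=
      Subtype.ext (image_eq_zero_of_notMem_tsupport (f := w) fun h => hz ⟨mem_univ _, h⟩)
    simp [k, hz0]
  intro x
  obtain ⟨y, hy : y + Function.extend ι k 0 y = ι (x, p₀)⟩ := surjective_id_add_of_hasCompactSupport
    (continuous_extend_zero_of_isOpenEmbedding hι hk hksupp)
    (hksupp.extend_zero hι.continuous) (ι (x, p₀))
  have hyι : y ∈ range ι := by
    by_contra hy'
    rw [Function.extend_apply' _ _ _ hy', Pi.zero_apply, add_zero] at hy
    exact hy' ⟨_, hy.symm⟩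
  obtain ⟨⟨x', p⟩, rfl⟩ := hyι
  rw [hι.injective.extend_apply, add_sub_cancel, hι.injective.eq_iff, Prod.mk_inj] at hy
  obtain ⟨hx, hp⟩ := hy
  have hdamped : damped p = 1 := Subtype.ext (hw1 hp)
  exact ⟨x', by simpa [hdamped] using hx⟩

theorem exists_restrict_eq_of_union_eq_univ {U V : Set Z} (hU : IsOpen U) (hV : IsOpen V)
    (hUV : U ∪ V = univ) (f : C(U, Y)) (g : C(V, Y))
    (hfg : ∀ z (hzU : z ∈ U) (hzV : z ∈ V), f ⟨z, hzU⟩ = g ⟨z, hzV⟩) :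
    ∃ h : C(Z, Y), h.restrict U = f ∧ h.restrict V = g := by
  let S : Bool → Set Z := fun b => cond b U V
  let φ : ∀ b, C(S b, Y) := fun | true => f | false => g
  have hφ : ∀ b c z (hzb : z ∈ S b) (hzc : z ∈ S c), φ b ⟨z, hzb⟩ = φ c ⟨z, hzc⟩ := by
    rintro (_ | _) (_ | _) z hzb hzc
    exacts [rfl, (hfg z hzc hzb).symm, hfg z hzb hzc, rfl]
  have hS : ∀ z, ∃ b, S b ∈ 𝓝 z := fun z =>
    (hUV.symm ▸ mem_univ z : z ∈ U ∪ V).elim (fun hz => ⟨true, hU.mem_nhds hz⟩)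
      fun hz => ⟨false, hV.mem_nhds hz⟩
  exact ⟨.liftCover S φ hφ hS, ContinuousMap.liftCover_restrict (i := true),
    ContinuousMap.liftCover_restrict (i := false)⟩

theorem exists_homotopic_eqOn_of_homotopic_restrict [NormalSpace Z] {A U : Set Z}
    (hA : IsClosed A) (hU : IsOpen U) (hAU : A ⊆ U) {f : C(Z, Y)} {g : C(U, Y)}
    (hfg : (f.restrict U).Homotopic g) :
    ∃ f' : C(Z, Y), f.Homotopic f' ∧ ∀ z : U, (z : Z) ∈ A → f' z = g z := by
  obtain ⟨F⟩ := hfg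
  obtain ⟨V, hV, hAV, hVU⟩ := normal_exists_closure_subset hA hU hAU
  obtain ⟨w, hw0, hw1, hwI⟩ := exists_continuous_zero_one_of_isClosed hV.isClosed_compl hA
    (disjoint_compl_left_iff_subset.2 hAV)
  let damped : C(Z, I) := ⟨fun z => ⟨w z, hwI z⟩, by fun_prop⟩
  have hdamped0 : ∀ z ∉ closure V, damped z = 0 := fun z hz =>
    Subtype.ext (hw0 fun hzV => hz (subset_closure hzV))
  have hdamped1 : ∀ z ∈ A, damped z = 1 := fun z hz => Subtype.ext (hw1 hz)
  let onU : C((Prod.snd ⁻¹' U : Set (I × Z)), Y) :=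
    ⟨fun z => F (z.1.1 * damped z.1.2, ⟨z.1.2, z.2⟩), by fun_prop⟩
  let offV : C((Prod.snd ⁻¹' (closure V)ᶜ : Set (I × Z)), Y) := ⟨fun z => f z.1.2, by fun_prop⟩
  obtain ⟨G, hGU, hGV⟩ := exists_restrict_eq_of_union_eq_univ (hU.preimage continuous_snd)
    (isClosed_closure.isOpen_compl.preimage continuous_snd)
    (eq_univ_of_forall fun z => or_iff_not_imp_right.2 fun hz => hVU (not_not.1 hz)) onU offV
    fun z hzU hzV => by simp [onU, offV, hdamped0 _ hzV]
  have hG : ∀ t (z : U), G (t, z) = F (t * damped z, z) := fun t z =>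
    DFunLike.congr_fun hGU ⟨(t, z), z.2⟩
  have hG' : ∀ t, ∀ z ∉ U, G (t, z) = f z := fun t z hz =>
    DFunLike.congr_fun hGV ⟨(t, z), fun hzV => hz (hVU hzV)⟩
  refine ⟨⟨fun z => G (1, z), by fun_prop⟩, ⟨⟨G, fun z => ?_, fun z => rfl⟩⟩, fun z hz => ?_⟩
  · by_cases hz : z ∈ U
    · simpa using hG 0 ⟨z, hz⟩
    · exact hG' 0 z hz
  · simpa [hdamped1 z hz] using hG 1 z

theorem homotopic_of_nullhomotopic [PathConnectedSpace Y] {f g : C(X, Y)}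
    (hf : f.Nullhomotopic) (hg : g.Nullhomotopic) : f.Homotopic g := by
  obtain ⟨y, hy⟩ := hf
  obtain ⟨y', hy'⟩ := hg
  obtain ⟨γ⟩ := PathConnectedSpace.joined y y'
  exact hy.trans (.trans ⟨⟨⟨fun z => γ z.1, by fun_prop⟩, by simp, by simp⟩⟩ hy'.symm)

theorem nullhomotopic_restrict_of_homotopic {f g : C(Z, Y)} (hfg : f.Homotopic g) {s : Set Z}
    {y : Y} (hg : ∀ z ∈ s, g z = y) : (f.restrict s).Nullhomotopic := by
  have hconst : g.restrict s = .const s y := ContinuousMap.ext fun z => hg z z.2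
  exact ⟨y, hconst ▸ hfg.comp (.refl ⟨Subtype.val, continuous_subtype_val⟩)⟩

theorem homotopic_restrict_iUnion {ι : Type*} {V : ι → Set Z} (hV : ∀ i, IsOpen (V i))
    (hdisj : Pairwise (Function.onFun Disjoint V)) {f g : C(Z, Y)}
    (hfg : ∀ i, (f.restrict (V i)).Homotopic (g.restrict (V i))) :
    (f.restrict (⋃ i, V i)).Homotopic (g.restrict (⋃ i, V i)) := by
  let F := fun i => (hfg i).some
  let S : ι → Set (I × ⋃ i, V i) := fun i => {z | (z.2 : Z) ∈ V i}
  let φ : ∀ i, C(S i, Y) := fun i => ⟨fun z => F i (z.1.1, ⟨z.1.2, z.2⟩), by fun_prop⟩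
  have hφ : ∀ i j z (hzi : z ∈ S i) (hzj : z ∈ S j), φ i ⟨z, hzi⟩ = φ j ⟨z, hzj⟩ := by
    intro i j z hzi hzj
    obtain rfl : i = j := by_contra fun hij => (hdisj hij).notMem_of_mem_left hzi hzj
    rfl
  have hS : ∀ z, ∃ i, S i ∈ 𝓝 z := fun z => (mem_iUnion.1 z.2.2).imp fun i hi =>
    ((hV i).preimage (continuous_subtype_val.comp continuous_snd)).mem_nhds hi
  have hlift : ∀ t (z : ⋃ i, V i) i (hi : (z : Z) ∈ V i),
      ContinuousMap.liftCover S φ hφ hS (t, z) = F i (t, ⟨z, hi⟩) :=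
    fun t z i hi => ContinuousMap.liftCover_coe (i := i) ⟨(t, z), hi⟩
  refine ⟨⟨.liftCover S φ hφ hS, fun z => ?_, fun z => ?_⟩⟩ <;>
  · obtain ⟨i, hi⟩ := mem_iUnion.1 z.2
    simp [hlift _ z i hi]

theorem nullhomotopic_restrict_iUnion [PathConnectedSpace Y] {ι : Type*} {V : ι → Set Z}
    (hV : ∀ i, IsOpen (V i)) (hdisj : Pairwise (Function.onFun Disjoint V)) {f : C(Z, Y)}
    (hf : ∀ i, (f.restrict (V i)).Nullhomotopic) : (f.restrict (⋃ i, V i)).Nullhomotopic := by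
  obtain ⟨y⟩ := ‹PathConnectedSpace Y›.nonempty
  exact ⟨y, homotopic_restrict_iUnion hV hdisj (g := .const Z y) fun i =>
    homotopic_of_nullhomotopic (hf i) ⟨y, .refl _⟩⟩

theorem exists_homotopic_id_forall_fst_eq_or_snd_eq [NormalSpace (X × Y)] {U V : Set (X × Y)}
    (hU : IsOpen U) (hV : IsOpen V) (hUV : U ∪ V = univ)
    (hfst : ((.fst : C(X × Y, X)).restrict U).Nullhomotopic)
    (hsnd : ((.snd : C(X × Y, Y)).restrict V).Nullhomotopic) :
    ∃ f : C(X × Y, X × Y), f.Homotopic (.id _) ∧ ∃ p q, ∀ z, (f z).1 = p ∨ (f z).2 = q := by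
  obtain ⟨p, hp⟩ := hfst
  obtain ⟨q, hq⟩ := hsnd
  obtain ⟨W, hW, hVW, hWU⟩ := normal_exists_closure_subset hV.isClosed_compl hU
    (compl_subset_iff_union.2 ((union_comm V U).trans hUV))
  have hWV : Wᶜ ⊆ V := compl_subset_comm.1 hVW
  obtain ⟨f₁, hf₁, hf₁p⟩ := exists_homotopic_eqOn_of_homotopic_restrict isClosed_closure hU hWU hp
  obtain ⟨f₂, hf₂, hf₂q⟩ := exists_homotopic_eqOn_of_homotopic_restrict hW.isClosed_compl hV hWV hq
  refine ⟨f₁.prodMk f₂, (hf₁.prodMk hf₂).symm, p, q, fun z => ?_⟩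
  by_cases hz : z ∈ W
  · exact .inl (hf₁p ⟨z, hWU (subset_closure hz)⟩ (subset_closure hz))
  · exact .inr (hf₂q ⟨z, hWV hz⟩ hz)

end Homotopy

section MotionPlanner

open Set unitInterval

variable {X A B : Type*} [TopologicalSpace X] [TopologicalSpace A] [TopologicalSpace B]

/-- `HasMotionPlanner U` says that the endpoint map of the path space of `X` has a continuous
section over `U ⊆ X × X`, as required of the members of the covers in `topComplexity`. -/
def HasMotionPlanner (U : Set (X × X)) : Prop :=
  ∃ s : C(U, C(I, X)), ∀ z : U, s z 0 = (z : X × X).1 ∧ s z 1 = (z : X × X).2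

theorem hasMotionPlanner_iff_homotopic {U : Set (X × X)} : HasMotionPlanner U ↔
    ((.fst : C(X × X, X)).restrict U).Homotopic ((.snd : C(X × X, X)).restrict U) := by
  constructor
  · rintro ⟨s, hs⟩
    exact ⟨⟨⟨fun z => s z.2 z.1, by fun_prop⟩, fun z => (hs z).1, fun z => (hs z).2⟩⟩
  · rintro ⟨F⟩
    exact ⟨(F.toContinuousMap.comp .prodSwap).curry, fun z => ⟨F.apply_zero z, F.apply_one z⟩⟩

theorem HasMotionPlanner.homotopic {U : Set (X × X)} (hU : HasMotionPlanner U) {f g : C(A, X)}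
    (hfg : ∀ z, (f z, g z) ∈ U) : f.Homotopic g :=
  (hasMotionPlanner_iff_homotopic.1 hU).comp
    (.refl ⟨fun z => (⟨(f z, g z), hfg z⟩ : U), by fun_prop⟩)

theorem hasMotionPlanner_of_subset_prod [PathConnectedSpace X] {S T : Set X} {U : Set (X × X)}
    (hS : ((ContinuousMap.id X).restrict S).Nullhomotopic)
    (hT : ((ContinuousMap.id X).restrict T).Nullhomotopic) (hU : U ⊆ S ×ˢ T) :
    HasMotionPlanner U :=
  hasMotionPlanner_iff_homotopic.2 (homotopic_of_nullhomotopic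
    (hS.comp_left ⟨fun z : U => ⟨z.1.1, (hU z.2).1⟩, by fun_prop⟩)
    (hT.comp_left ⟨fun z : U => ⟨z.1.2, (hU z.2).2⟩, by fun_prop⟩))

theorem HasMotionPlanner.union {U V : Set (X × X)} (hU : HasMotionPlanner U)
    (hV : HasMotionPlanner V) (hUo : IsOpen U) (hVo : IsOpen V) (hUV : Disjoint U V) :
    HasMotionPlanner (U ∪ V) := by
  rw [hasMotionPlanner_iff_homotopic] at *
  rw [union_eq_iUnion]
  exact homotopic_restrict_iUnion (Bool.forall_bool.2 ⟨hVo, hUo⟩)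
    ((pairwise_disjoint_on_bool).2 hUV) (Bool.forall_bool.2 ⟨hV, hU⟩)

theorem topComplexity_le {m : ℕ} {U : Fin (m + 1) → Set (X × X)} (hU : ∀ i, IsOpen (U i))
    (hcover : ⋃ i, U i = univ) (hplan : ∀ i, HasMotionPlanner (U i)) : topComplexity X ≤ m :=
  sInf_le ⟨m, rfl, U, hU, hcover, hplan⟩

theorem two_le_topComplexity (h : ∀ U V : Set (X × X), IsOpen U → IsOpen V → U ∪ V = univ →
    HasMotionPlanner U → ¬ HasMotionPlanner V) : 2 ≤ topComplexity X := by
  refine le_sInf ?_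
  rintro _ ⟨m, rfl, U, hU, hcover, hplan⟩
  by_contra! hm
  have hm : m < 2 := by exact_mod_cast hm
  refine h (U 0) (U (Fin.last m)) (hU _) (hU _) ?_ (hplan _) (hplan _)
  refine eq_univ_of_forall fun z => ?_
  obtain ⟨i, hi⟩ := mem_iUnion.1 (hcover ▸ mem_univ z)
  obtain rfl | rfl : i = 0 ∨ i = Fin.last m := by
    simp only [Fin.ext_iff, Fin.val_zero, Fin.val_last]
    omega
  exacts [.inl hi, .inr hi]

theorem topComplexity_le_two [PathConnectedSpace X] {α : Type*} [LinearOrder α]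
    [TopologicalSpace α] [OrderClosedTopology α] {f : X → α} (hf : Continuous f) {a b : α}
    (hab : a < b) (ha : ((ContinuousMap.id X).restrict {x | a < f x}).Nullhomotopic)
    (hb : ((ContinuousMap.id X).restrict {x | f x < b}).Nullhomotopic) :
    topComplexity X ≤ 2 := by
  let high : Set X := {x | a < f x}
  let low : Set X := {x | f x < b}
  have hhigh : IsOpen high := isOpen_lt continuous_const hf
  have hlow : IsOpen low := isOpen_lt hf continuous_const
  have hgt : IsOpen {z : X × X | f z.2 < f z.1} := isOpen_lt (by fun_prop) (by fun_prop)
  have hlt : IsOpen {z : X × X | f z.1 < f z.2} := isOpen_lt (by fun_prop) (by fun_prop)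
  let down : Set (X × X) := high ×ˢ low ∩ {z | f z.2 < f z.1}
  let up : Set (X × X) := low ×ˢ high ∩ {z | f z.1 < f z.2}
  have hdown : IsOpen down := (hhigh.prod hlow).inter hgt
  have hup : IsOpen up := (hlow.prod hhigh).inter hlt
  have hdisj : Disjoint down up :=
    disjoint_left.2 fun z hz hz' => (lt_asymm hz.2 hz'.2)
  refine topComplexity_le (m := 2) (U := ![high ×ˢ high, down ∪ up, low ×ˢ low]) ?_ ?_ ?_
  · simpa [Fin.forall_fin_succ] using ⟨hhigh.prod hhigh, hdown.union hup, hlow.prod hlow⟩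
  · refine eq_univ_of_forall fun z => mem_iUnion.2 ?_
    have hz : z ∈ high ×ˢ high ∨ z ∈ down ∪ up ∨ z ∈ low ×ˢ low := by
      simp only [high, low, down, up, mem_union, mem_inter_iff, mem_prod, mem_ofPred_eq]
      grind
    simpa [Fin.exists_fin_succ] using hz
  · have hmid : HasMotionPlanner (down ∪ up) :=
      (hasMotionPlanner_of_subset_prod ha hb inter_subset_left).union
        (hasMotionPlanner_of_subset_prod hb ha inter_subset_left) hdown hup hdisj
    simpa [Fin.forall_fin_succ] using ⟨hasMotionPlanner_of_subset_prod ha ha subset_rfl, hmid,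
      hasMotionPlanner_of_subset_prod hb hb subset_rfl⟩

theorem two_le_topComplexity_of_retracts [NormalSpace (A × B)] [Nontrivial A] [Nontrivial B]
    (hsurj : ∀ f : C(A × B, A × B), f.Homotopic (.id _) → Function.Surjective f)
    {i : C(A, X)} {j : C(B, X)} {r : C(X, A)} {s : C(X, B)} {a : A} {b : B}
    (hri : ∀ x, r (i x) = x) (hrj : ∀ y, r (j y) = a) (hsj : ∀ y, s (j y) = y)
    (hsi : ∀ x, s (i x) = b) : 2 ≤ topComplexity X := by
  refine two_le_topComplexity fun U V hU hV hUV hplanU hplanV => ?_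
  let k : C(A × B, X × X) := i.prodMap j
  have hhomotopic : ∀ W, HasMotionPlanner W →
      ((i.comp .fst).restrict (k ⁻¹' W)).Homotopic ((j.comp .snd).restrict (k ⁻¹' W)) :=
    fun W hW => hW.homotopic fun z => z.2
  have hfst : ((.fst : C(A × B, A)).restrict (k ⁻¹' U)).Nullhomotopic := by
    refine ⟨a, ?_⟩
    convert (ContinuousMap.Homotopic.refl r).comp (hhomotopic U hplanU) using 1
    exacts [ContinuousMap.ext fun z => (hri _).symm, ContinuousMap.ext fun z => (hrj _).symm]
  have hsnd : ((.snd : C(A × B, B)).restrict (k ⁻¹' V)).Nullhomotopic := by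
    refine ⟨b, ?_⟩
    convert (ContinuousMap.Homotopic.refl s).comp (hhomotopic V hplanV).symm using 1
    exacts [ContinuousMap.ext fun z => (hsj _).symm, ContinuousMap.ext fun z => (hsi _).symm]
  obtain ⟨f, hf, p, q, hpq⟩ := exists_homotopic_id_forall_fst_eq_or_snd_eq
    (hU.preimage k.continuous) (hV.preimage k.continuous)
    (by rw [← preimage_union, hUV, preimage_univ]) hfst hsnd
  obtain ⟨p', hp'⟩ := exists_ne p
  obtain ⟨q', hq'⟩ := exists_ne q
  obtain ⟨z, hz⟩ := hsurj f hf (p', q')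
  rcases hpq z with h | h <;> rw [hz] at h
  exacts [hp' h, hq' h]

end MotionPlanner

section Sphere

open Set Metric Topology

variable {E F : Type*} [NormedAddCommGroup E] [NormedSpace ℝ E] [NormedAddCommGroup F]
  [NormedSpace ℝ F]

theorem eq_half_and_eq_neg_of_one_sub_smul_add_smul_eq_zero {x b : E} (hx : ‖x‖ = 1)
    (hb : ‖b‖ = 1) {t : ℝ} (ht0 : 0 ≤ t) (ht1 : t ≤ 1) (h : (1 - t) • x + t • b = 0) :
    t = 1 / 2 ∧ x = -b := by
  have ht : 1 - t = t := by
    have hnorm := congrArg norm (eq_neg_of_add_eq_zero_left h)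
    rwa [norm_neg, norm_smul, norm_smul, hx, hb, Real.norm_of_nonneg (sub_nonneg.2 ht1),
      Real.norm_of_nonneg ht0, mul_one, mul_one] at hnorm
  have ht2 : t = 1 / 2 := by linarith
  rw [ht, ← smul_add, smul_eq_zero_iff_right (by norm_num [ht2])] at h
  exact ⟨ht2, eq_neg_of_add_eq_zero_left h⟩

/-- Each point `x` moves towards `b` along the normalized chord, with a speed that vanishes at `-b`,
where the chord would pass through `0`. -/
theorem exists_homotopicRel_id_of_le_dist_neg (b : sphere (0 : E) 1) {ε : ℝ} (hε : 0 < ε) :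
    ∃ g : C(sphere (0 : E) 1, sphere (0 : E) 1), (ContinuousMap.id _).HomotopicRel g {b} ∧
      ∀ x, ε ≤ dist x (-b) → g x = b := by
  let w : sphere (0 : E) 1 → ℝ := fun x => min 1 (dist x (-b) / ε)
  have hw0 : ∀ x, 0 ≤ w x := fun x => by positivity
  have hw1 : ∀ x, w x ≤ 1 := fun x => min_le_left _ _
  let l : unitInterval × sphere (0 : E) 1 → E :=
    fun z => (1 - z.1 * w z.2) • (z.2 : E) + (z.1 * w z.2) • (b : E)
  have hl : Continuous l := by fun_prop
  have hl0 : ∀ z, ‖l z‖ ≠ 0 := by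
    rintro ⟨t, x⟩ hz
    obtain ⟨ht, hx⟩ := eq_half_and_eq_neg_of_one_sub_smul_add_smul_eq_zero (norm_eq_of_mem_sphere x)
      (norm_eq_of_mem_sphere b) (mul_nonneg t.2.1 (hw0 x)) (mul_le_one₀ t.2.2 (hw0 x) (hw1 x))
      (norm_eq_zero.1 hz)
    have hwx : w x = 0 := by simp [w, show x = -b from Subtype.ext hx]
    norm_num [hwx] at ht
  have hmem : ∀ z, ‖l z‖⁻¹ • l z ∈ sphere (0 : E) 1 := fun z => by simp [norm_smul, hl0 z]
  let G : C(unitInterval × sphere (0 : E) 1, sphere (0 : E) 1) :=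
    ⟨fun z => ⟨‖l z‖⁻¹ • l z, hmem z⟩, ((hl.norm.inv₀ hl0).smul hl).subtype_mk hmem⟩
  have hGl : ∀ z (y : sphere (0 : E) 1), l z = y → G z = y := fun z y hz =>
    Subtype.ext (by simp [G, hz, norm_eq_of_mem_sphere])
  refine ⟨⟨fun x => G (1, x), by fun_prop⟩,
    ⟨⟨⟨G, fun x => hGl _ _ (by simp [l]), fun x => rfl⟩, ?_⟩⟩, fun x hx => hGl _ _ ?_⟩
  · rintro t x rfl
    exact hGl _ _ (by simp only [l, ContinuousMap.id_apply]; module)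
  · have hwx : w x = 1 := min_eq_left ((one_le_div₀ hε).2 hx)
    simp [l, hwx]

theorem two_le_dist_add_dist_neg (x b : sphere (0 : E) 1) : 2 ≤ dist x b + dist x (-b) :=
  calc (2 : ℝ) = dist b (-b) := by
        rw [Subtype.dist_eq, dist_eq_norm, coe_neg_sphere, sub_neg_eq_add, ← two_smul ℝ, norm_smul,
          norm_eq_of_mem_sphere]
        norm_num
    _ ≤ dist x b + dist x (-b) := dist_triangle_left _ _ _

theorem isOpenEmbedding_sphere_prod_Ioi :
    IsOpenEmbedding fun z : sphere (0 : E) 1 × Ioi (0 : ℝ) =>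
      ((homeomorphUnitSphereProd E).symm z : E) :=
  isOpen_compl_singleton.isOpenEmbedding_subtypeVal.comp
    (homeomorphUnitSphereProd E).symm.isOpenEmbedding

theorem surjective_sphere_prod_of_homotopic_id [FiniteDimensional ℝ E] [FiniteDimensional ℝ F]
    {f : C(sphere (0 : E) 1 × sphere (0 : F) 1, sphere (0 : E) 1 × sphere (0 : F) 1)}
    (hf : f.Homotopic (.id _)) : Function.Surjective f := by
  have : LocallyCompactSpace (Ioi (0 : ℝ)) := isOpen_Ioi.locallyCompactSpace
  exact surjective_of_homotopic_id
    ((isOpenEmbedding_sphere_prod_Ioi.prodMap isOpenEmbedding_sphere_prod_Ioi).comp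
      (Homeomorph.prodProdProdComm _ _ _ _).isOpenEmbedding) hf

theorem nontrivial_sphere [Nontrivial E] : Nontrivial (sphere (0 : E) 1) := by
  obtain ⟨x, hx⟩ := NormedSpace.sphere_nonempty (x := (0 : E)) |>.2 zero_le_one
  exact ⟨⟨x, hx⟩, -⟨x, hx⟩, ne_neg_of_mem_unit_sphere ℝ _⟩

end Sphere

section Wedge

open Set Metric unitInterval

section BasepointDist

variable {d : ℕ} (b : unitSphere d)

/-- The chordal distance to `b`, through the ambient Euclidean space of `unitSphere d`. -/
noncomputable def basepointDist : C(unitSphere d, ℝ) where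
  toFun x := dist (α := sphere (0 : EuclideanSpace ℝ (Fin (d + 1))) 1) x b
  continuous_toFun := Continuous.dist
    (α := sphere (0 : EuclideanSpace ℝ (Fin (d + 1))) 1) continuous_id continuous_const

theorem basepointDist_self : basepointDist b b = 0 :=
  dist_self (α := sphere (0 : EuclideanSpace ℝ (Fin (d + 1))) 1) b

theorem exists_homotopicRel_id_of_basepointDist_lt :
    ∃ g : C(unitSphere d, unitSphere d), (ContinuousMap.id _).HomotopicRel g {b} ∧
      ∀ x, basepointDist b x < 3 / 2 → g x = b := by
  obtain ⟨g, hg, hgb⟩ := exists_homotopicRel_id_of_le_dist_neg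
    (E := EuclideanSpace ℝ (Fin (d + 1))) b one_half_pos
  refine ⟨g, hg, fun x (hx : dist (α := sphere _ _) x b < 3 / 2) => hgb x ?_⟩
  linarith [two_le_dist_add_dist_neg (E := EuclideanSpace ℝ (Fin (d + 1))) x b]

theorem nullhomotopic_restrict_lt_basepointDist :
    ((ContinuousMap.id _).restrict {x | 1 / 2 < basepointDist b x}).Nullhomotopic := by
  let b' : sphere (0 : EuclideanSpace ℝ (Fin (d + 1))) 1 := b
  obtain ⟨g, hg, hgb⟩ := exists_homotopicRel_id_of_le_dist_neg (-b') one_half_pos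
  refine nullhomotopic_restrict_of_homotopic hg.homotopic fun x hx => hgb x ?_
  rw [neg_neg]
  exact le_of_lt hx

end BasepointDist

variable {n : ℕ} {d : Fin n → ℕ} {b : ∀ i, unitSphere (d i)} {Y : Type*} [TopologicalSpace Y]

variable (b) in
/-- The inclusion of the `i`-th sphere into the wedge. -/
noncomputable def wedgeInclusion (i : Fin n) : C(unitSphere (d i), WedgeOfSpheres d b) where
  toFun x := Quotient.mk (wedgeSetoid d b) ⟨i, x⟩
  continuous_toFun := continuous_quotient_mk'.comp continuous_sigmaMk

theorem wedgeInclusion_basepoint (i j : Fin n) :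
    wedgeInclusion b i (b i) = wedgeInclusion b j (b j) :=
  Quotient.sound (Or.inr ⟨rfl, rfl⟩)

theorem exists_wedgeInclusion_eq (z : WedgeOfSpheres d b) : ∃ i x, wedgeInclusion b i x = z := by
  obtain ⟨⟨i, x⟩, rfl⟩ := Quotient.exists_rep z
  exact ⟨i, x, rfl⟩

/-- The map out of the wedge given by maps on the spheres that agree at the basepoints. -/
noncomputable def wedgeDesc (f : ∀ i, C(unitSphere (d i), Y)) (hf : ∀ i j, f i (b i) = f j (b j)) :
    C(WedgeOfSpheres d b, Y) where
  toFun := Quotient.lift (ContinuousMap.sigma f) <| by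
    rintro x y (rfl | ⟨hx, hy⟩)
    · rfl
    · simpa [hx, hy] using hf x.1 y.1
  continuous_toFun := (ContinuousMap.sigma f).continuous.quotient_lift _

@[simp]
theorem wedgeDesc_wedgeInclusion (f : ∀ i, C(unitSphere (d i), Y))
    (hf : ∀ i j, f i (b i) = f j (b j)) (i : Fin n) (x : unitSphere (d i)) :
    wedgeDesc f hf (wedgeInclusion b i x) = f i x :=
  rfl

theorem homotopic_of_forall_homotopicRel {f g : C(WedgeOfSpheres d b, Y)}
    (h : ∀ i, (f.comp (wedgeInclusion b i)).HomotopicRel (g.comp (wedgeInclusion b i)) {b i}) :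
    f.Homotopic g := by
  let F := fun i => (h i).some
  let paths : ∀ i, C(unitSphere (d i), C(I, Y)) := fun i =>
    ((F i).toContinuousMap.comp .prodSwap).curry
  have hpaths : ∀ i, paths i (b i) = .const I (f (wedgeInclusion b i (b i))) := fun i =>
    ContinuousMap.ext fun t => (F i).eq_fst t rfl
  let H : C(WedgeOfSpheres d b, C(I, Y)) := wedgeDesc paths fun i j => by
    rw [hpaths, hpaths, wedgeInclusion_basepoint]
  refine ⟨⟨H.uncurry.comp .prodSwap, fun z => ?_, fun z => ?_⟩⟩ <;>
    obtain ⟨i, x, rfl⟩ := exists_wedgeInclusion_eq z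
  exacts [(F i).apply_zero x, (F i).apply_one x]

variable (b) in
/-- The retraction of the wedge onto its `i`-th sphere. -/
noncomputable def wedgeCollapse (i : Fin n) : C(WedgeOfSpheres d b, unitSphere (d i)) :=
  let f : ∀ j, C(unitSphere (d j), unitSphere (d i)) :=
    Function.update (fun _ => .const _ (b i)) i (.id _)
  have hf : ∀ j, f j (b j) = b i := fun j => by
    rcases eq_or_ne j i with rfl | hj
    · simp [f]
    · simp [f, hj]
  wedgeDesc f fun j k => (hf j).trans (hf k).symm

@[simp]
theorem wedgeCollapse_wedgeInclusion_self (i : Fin n) (x : unitSphere (d i)) :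
    wedgeCollapse b i (wedgeInclusion b i x) = x := by
  simp [wedgeCollapse]

theorem wedgeCollapse_wedgeInclusion_of_ne {i j : Fin n} (hij : j ≠ i) (x : unitSphere (d j)) :
    wedgeCollapse b i (wedgeInclusion b j x) = b i := by
  simp [wedgeCollapse, hij]

theorem wedgeInclusion_wedgeCollapse {i : Fin n} {z : WedgeOfSpheres d b}
    (hz : wedgeCollapse b i z ≠ b i) : wedgeInclusion b i (wedgeCollapse b i z) = z := by
  obtain ⟨j, x, rfl⟩ := exists_wedgeInclusion_eq z
  obtain rfl : j = i := by_contra fun hj => hz (wedgeCollapse_wedgeInclusion_of_ne hj x)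
  rw [wedgeCollapse_wedgeInclusion_self]

variable (d b) in
/-- The distance to the common basepoint, measured inside each sphere. -/
noncomputable def wedgeHeight : C(WedgeOfSpheres d b, ℝ) :=
  wedgeDesc (fun i => basepointDist (b i)) fun i j => by simp only [basepointDist_self]

theorem nullhomotopic_restrict_wedgeHeight_lt (i₀ : Fin n) :
    ((ContinuousMap.id _).restrict {z | wedgeHeight d b z < 3 / 2}).Nullhomotopic := by
  choose g hg hgb using fun i => exists_homotopicRel_id_of_basepointDist_lt (b i)
  let G : C(WedgeOfSpheres d b, WedgeOfSpheres d b) :=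
    wedgeDesc (fun i => (wedgeInclusion b i).comp (g i)) fun i j => by
      simp only [ContinuousMap.comp_apply, ← (hg _).fst_eq_snd rfl, ContinuousMap.id_apply,
        wedgeInclusion_basepoint i j]
  have hG : (ContinuousMap.id _).Homotopic G :=
    homotopic_of_forall_homotopicRel fun i => (hg i).comp_continuousMap (wedgeInclusion b i)
  refine nullhomotopic_restrict_of_homotopic hG (y := wedgeInclusion b i₀ (b i₀)) fun z hz => ?_
  obtain ⟨i, x, rfl⟩ := exists_wedgeInclusion_eq z
  simp only [G, wedgeDesc_wedgeInclusion, ContinuousMap.comp_apply, hgb i x hz,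
    wedgeInclusion_basepoint i i₀]

variable (b) in
/-- The part of the `i`-th sphere at distance more than `1 / 2` from the basepoint, as a subset of
the wedge. -/
def farFromBasepoint (i : Fin n) : Set (WedgeOfSpheres d b) :=
  {z | 1 / 2 < basepointDist (b i) (wedgeCollapse b i z)}

theorem isOpen_farFromBasepoint (i : Fin n) : IsOpen (farFromBasepoint b i) :=
  isOpen_lt continuous_const (by fun_prop)

theorem wedgeInclusion_wedgeCollapse_of_mem {i : Fin n} {z : WedgeOfSpheres d b}
    (hz : z ∈ farFromBasepoint b i) : wedgeInclusion b i (wedgeCollapse b i z) = z := by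
  refine wedgeInclusion_wedgeCollapse fun hb => ?_
  have hz : 1 / 2 < basepointDist (b i) (wedgeCollapse b i z) := hz
  rw [hb, basepointDist_self] at hz
  linarith

theorem pairwise_disjoint_farFromBasepoint :
    Pairwise (Function.onFun Disjoint (farFromBasepoint b)) := by
  refine fun i j hij => disjoint_left.2 fun z hi hj => ?_
  have hj : 1 / 2 < basepointDist (b j) (wedgeCollapse b j z) := hj
  rw [← wedgeInclusion_wedgeCollapse_of_mem hi, wedgeCollapse_wedgeInclusion_of_ne hij,
    basepointDist_self] at hj
  linarith

theorem iUnion_farFromBasepoint :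
    ⋃ i, farFromBasepoint b i = {z | 1 / 2 < wedgeHeight d b z} := by
  ext z
  simp only [mem_iUnion]
  constructor
  · rintro ⟨i, hi⟩
    rw [← wedgeInclusion_wedgeCollapse_of_mem hi]
    exact hi
  · obtain ⟨i, x, rfl⟩ := exists_wedgeInclusion_eq z
    intro hz
    refine ⟨i, ?_⟩
    rw [farFromBasepoint, mem_ofPred_eq, wedgeCollapse_wedgeInclusion_self]
    exact hz

theorem nullhomotopic_restrict_farFromBasepoint (i : Fin n) :
    ((ContinuousMap.id _).restrict (farFromBasepoint b i)).Nullhomotopic := by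
  convert ((nullhomotopic_restrict_lt_basepointDist (b i)).comp_left
    ⟨fun z : farFromBasepoint b i => ⟨wedgeCollapse b i z, z.2⟩, by fun_prop⟩).comp_right
    (wedgeInclusion b i) using 1
  exact ContinuousMap.ext fun z => (wedgeInclusion_wedgeCollapse_of_mem z.2).symm

theorem nullhomotopic_restrict_lt_wedgeHeight [PathConnectedSpace (WedgeOfSpheres d b)] :
    ((ContinuousMap.id _).restrict {z | 1 / 2 < wedgeHeight d b z}).Nullhomotopic := by
  rw [← iUnion_farFromBasepoint]
  exact nullhomotopic_restrict_iUnion isOpen_farFromBasepoint pairwise_disjoint_farFromBasepoint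
    nullhomotopic_restrict_farFromBasepoint

theorem pathConnectedSpace_unitSphere {m : ℕ} (hm : 1 ≤ m) : PathConnectedSpace (unitSphere m) := by
  have hrank : 1 < Module.rank ℝ (EuclideanSpace ℝ (Fin (m + 1))) := by
    rw [← Module.finrank_eq_rank, finrank_euclideanSpace_fin]
    exact_mod_cast Nat.lt_succ_of_le hm
  exact isPathConnected_iff_pathConnectedSpace.1 (isPathConnected_sphere hrank 0 zero_le_one)

theorem pathConnectedSpace_wedgeOfSpheres [∀ i, PathConnectedSpace (unitSphere (d i))]
    (i₀ : Fin n) : PathConnectedSpace (WedgeOfSpheres d b) := by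
  have hjoined : ∀ z, Joined (wedgeInclusion b i₀ (b i₀)) z := fun z => by
    obtain ⟨i, x, rfl⟩ := exists_wedgeInclusion_eq z
    rw [wedgeInclusion_basepoint i₀ i]
    exact (PathConnectedSpace.joined (b i) x).map (wedgeInclusion b i).continuous
  exact ⟨⟨wedgeInclusion b i₀ (b i₀)⟩, fun z z' => (hjoined z).symm.trans (hjoined z')⟩

theorem topComplexity_wedgeOfSpheres_le_two (hd : ∀ i, 1 ≤ d i) (i₀ : Fin n) :
    topComplexity (WedgeOfSpheres d b) ≤ 2 := by
  have := fun i => pathConnectedSpace_unitSphere (hd i)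
  have : PathConnectedSpace (WedgeOfSpheres d b) := pathConnectedSpace_wedgeOfSpheres i₀
  exact topComplexity_le_two (wedgeHeight d b).continuous (by norm_num : (1 / 2 : ℝ) < 3 / 2)
    nullhomotopic_restrict_lt_wedgeHeight (nullhomotopic_restrict_wedgeHeight_lt i₀)

theorem two_le_topComplexity_wedgeOfSpheres {i j : Fin n} (hij : i ≠ j) :
    2 ≤ topComplexity (WedgeOfSpheres d b) :=
  have (k : Fin n) := nontrivial_sphere (E := EuclideanSpace ℝ (Fin (d k + 1)))
  two_le_topComplexity_of_retracts
    (A := sphere (0 : EuclideanSpace ℝ (Fin (d i + 1))) 1)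
    (B := sphere (0 : EuclideanSpace ℝ (Fin (d j + 1))) 1)
    (i := wedgeInclusion b i) (j := wedgeInclusion b j)
    (r := wedgeCollapse b i) (s := wedgeCollapse b j)
    (fun _ => surjective_sphere_prod_of_homotopic_id) (wedgeCollapse_wedgeInclusion_self i)
    (wedgeCollapse_wedgeInclusion_of_ne hij.symm) (wedgeCollapse_wedgeInclusion_self j)
    (wedgeCollapse_wedgeInclusion_of_ne hij)

end Wedge

/-- The topological complexity of a wedge of `n ≥ 2` spheres of dimensions `≥ 1` is `2`. -/
theorem topComplexity_wedgeOfSpheres {n : ℕ} (hn : 2 ≤ n) (d : Fin n → ℕ)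
    (hd : ∀ i, 1 ≤ d i) (b : ∀ i, unitSphere (d i)) :
    topComplexity (WedgeOfSpheres d b) = 2 := by
  have hne : (⟨0, by omega⟩ : Fin n) ≠ ⟨1, by omega⟩ := by simp
  exact le_antisymm (topComplexity_wedgeOfSpheres_le_two hd ⟨0, by omega⟩)
    (two_le_topComplexity_wedgeOfSpheres hne)
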